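/- Context erasure: let C ∈ PC and let V be a pomset with V ⊑ C[1], where 1 is the empty pomset. Then there exists C' ∈ PC such that C' ⊑ C and C'[1] = V; moreover, if V ∈ SP then C' can be chosen in PC^sp. -/

import Mathlib

namespace CKAH

open Classical

/-! ### Labelled posets and pomsets -/

/-- A labelled poset over alphabet `A`: a finite carrier with a partial order and labelling. -/
structure LPoset (A : Type) : Type 1 where
  carrier : Type
  [fin : Fintype carrier]
  [ord : PartialOrder carrier]
  lab : carrier → A

attribute [instance] LPoset.fin LPoset.ord

/-- Isomorphism of labelled posets: an order isomorphism preserving labels. -/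
def LPoset.Iso {A : Type} (u v : LPoset A) : Prop :=
  ∃ e : u.carrier ≃o v.carrier, ∀ x, v.lab (e x) = u.lab x

theorem LPoset.iso_equivalence (A : Type) : Equivalence (LPoset.Iso (A := A)) where
  refl u := ⟨OrderIso.refl _, fun _ => rfl⟩
  symm := by
    rintro u v ⟨e, he⟩
    exact ⟨e.symm, fun x => by rw [← he (e.symm x), OrderIso.apply_symm_apply]⟩
  trans := by
    rintro u v w ⟨e, he⟩ ⟨f, hf⟩
    exact ⟨e.trans f, fun x => by rw [OrderIso.trans_apply, hf, he]⟩

instance pomSetoid (A : Type) : Setoid (LPoset A) := ⟨LPoset.Iso, LPoset.iso_equivalence A⟩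

/-- A pomset is an isomorphism class of labelled posets. -/
def Pomset (A : Type) : Type 1 := Quotient (pomSetoid A)

/-- Sequential composition of labelled posets: disjoint union, everything on the left
below everything on the right (lexicographic sum order). -/
def LPoset.seqL {A : Type} (u v : LPoset A) : LPoset A where
  carrier := u.carrier ⊕ₗ v.carrier
  fin := inferInstanceAs (Fintype (u.carrier ⊕ v.carrier))
  lab := fun x => Sum.elim u.lab v.lab (ofLex x)

/-- Parallel composition of labelled posets: disjoint union with no cross ordering. -/
def LPoset.parL {A : Type} (u v : LPoset A) : LPoset A where
  carrier := u.carrier ⊕ v.carrier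
  lab := Sum.elim u.lab v.lab

def Pomset.seq {A : Type} : Pomset A → Pomset A → Pomset A :=
  Quotient.map₂ LPoset.seqL (by
    rintro u₁ u₂ ⟨e, he⟩ v₁ v₂ ⟨f, hf⟩
    refine ⟨(RelIso.sumLexCongr e f :
      (u₁.carrier ⊕ₗ v₁.carrier) ≃o (u₂.carrier ⊕ₗ v₂.carrier)), ?_⟩
    rintro (x | x)
    · exact he x
    · exact hf x)

/-- Order isomorphism between disjoint-union orders, from component isomorphisms. -/
def sumOrderIso {α β γ δ : Type} [PartialOrder α] [PartialOrder β] [PartialOrder γ]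
    [PartialOrder δ] (e : α ≃o γ) (f : β ≃o δ) : (α ⊕ β) ≃o (γ ⊕ δ) where
  toEquiv := Equiv.sumCongr e.toEquiv f.toEquiv
  map_rel_iff' := by
    rintro (x | x) (y | y) <;> simp [Sum.le_def, e.le_iff_le, f.le_iff_le]

def Pomset.par {A : Type} : Pomset A → Pomset A → Pomset A :=
  Quotient.map₂ LPoset.parL (by
    rintro u₁ u₂ ⟨e, he⟩ v₁ v₂ ⟨f, hf⟩
    refine ⟨sumOrderIso e f, ?_⟩
    rintro (x | x)
    · exact he x
    · exact hf x)

def LPoset.emptyL (A : Type) : LPoset A := { carrier := Fin 0, lab := fun x => x.elim0 }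

def LPoset.singleL {A : Type} (a : A) : LPoset A := { carrier := PUnit, lab := fun _ => a }

/-- The empty pomset `1`. -/
def Pomset.empty (A : Type) : Pomset A := ⟦LPoset.emptyL A⟧

/-- The single-letter pomset. -/
def Pomset.single {A : Type} (a : A) : Pomset A := ⟦LPoset.singleL a⟧

/-- Subsumption on labelled posets: `u ⊑ v` iff there is a label-preserving
order-preserving bijection from the carrier of `v` to that of `u`. -/
def LPoset.subL {A : Type} (u v : LPoset A) : Prop :=
  ∃ h : v.carrier ≃ u.carrier,
    (∀ x, u.lab (h x) = v.lab x) ∧ ∀ x y : v.carrier, x ≤ y → h x ≤ h y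

/-- Subsumption of pomsets: `Pomset.sub U V` means `U ⊑ V`. -/
def Pomset.sub {A : Type} : Pomset A → Pomset A → Prop :=
  Quotient.lift₂ LPoset.subL (by
    rintro u₁ v₁ u₂ v₂ ⟨e, he⟩ ⟨f, hf⟩
    refine propext ⟨?_, ?_⟩
    · rintro ⟨h, hl, hm⟩
      refine ⟨(f.toEquiv.symm.trans h).trans e.toEquiv, fun x => ?_, fun x y hxy => ?_⟩
      · show u₂.lab (e (h (f.symm x))) = v₂.lab x
        rw [he, hl, ← hf (f.symm x), OrderIso.apply_symm_apply]
      · simp only [Equiv.trans_apply]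
        exact e.le_iff_le.mpr (hm _ _ (f.symm.le_iff_le.mpr hxy))
    · rintro ⟨h, hl, hm⟩
      refine ⟨(f.toEquiv.trans h).trans e.toEquiv.symm, fun x => ?_, fun x y hxy => ?_⟩
      · show u₁.lab (e.symm (h (f x))) = v₁.lab x
        rw [← he (e.symm (h (f x))), OrderIso.apply_symm_apply, hl, hf]
      · simp only [Equiv.trans_apply]
        exact e.symm.le_iff_le.mpr (hm _ _ (f.le_iff_le.mpr hxy)))

def LPoset.isWordL {A : Type} (u : LPoset A) : Prop := ∀ x y : u.carrier, x ≤ y ∨ y ≤ x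

/-- A pomset is a word when it is totally ordered. -/
def Pomset.IsWord {A : Type} : Pomset A → Prop :=
  Quotient.lift LPoset.isWordL (by
    rintro u v ⟨e, -⟩
    refine propext ⟨fun h x y => ?_, fun h x y => ?_⟩
    · rcases h (e.symm x) (e.symm y) with h' | h'
      · exact Or.inl (e.symm.le_iff_le.mp h')
      · exact Or.inr (e.symm.le_iff_le.mp h')
    · rcases h (e x) (e y) with h' | h'
      · exact Or.inl (e.le_iff_le.mp h')
      · exact Or.inr (e.le_iff_le.mp h'))

def LPoset.mapL {A B : Type} (f : A → B) (u : LPoset A) : LPoset B :=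
  { carrier := u.carrier, lab := f ∘ u.lab }

/-- Relabelling of pomsets along a function on letters. -/
def Pomset.map {A B : Type} (f : A → B) : Pomset A → Pomset B :=
  Quotient.map (LPoset.mapL f)
    (by rintro u v ⟨e, he⟩; exact ⟨e, fun x => congrArg f (he x)⟩)

def LPoset.overL {A : Type} (Γ : Set A) (u : LPoset A) : Prop := ∀ x, u.lab x ∈ Γ

/-- All labels of the pomset belong to `Γ`. -/
def Pomset.Over {A : Type} (Γ : Set A) : Pomset A → Prop :=
  Quotient.lift (LPoset.overL Γ) (by
    rintro u v ⟨e, he⟩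
    refine propext ⟨fun h x => ?_, fun h x => ?_⟩
    · have h2 := he (e.symm x)
      rw [OrderIso.apply_symm_apply] at h2
      rw [h2]; exact h _
    · rw [← he x]; exact h _)

/-- Series-parallel pomsets. -/
inductive Pomset.IsSP {A : Type} : Pomset A → Prop
  | empty : Pomset.IsSP (Pomset.empty A)
  | single (a : A) : Pomset.IsSP (Pomset.single a)
  | seq {U V : Pomset A} : Pomset.IsSP U → Pomset.IsSP V → Pomset.IsSP (Pomset.seq U V)
  | par {U V : Pomset A} : Pomset.IsSP U → Pomset.IsSP V → Pomset.IsSP (Pomset.par U V)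

def SPset (A : Type) : Set (Pomset A) := {U | U.IsSP}

/-! ### Pomset contexts -/

/-- Contexts are pomsets over `Option A`, where `none` plays the role of `*`.
`uniqueStarL` says there is exactly one `*`-labelled node. -/
def LPoset.uniqueStarL {A : Type} (c : LPoset (Option A)) : Prop := ∃! x, c.lab x = none

theorem LPoset.uniqueStarL_congr {A : Type} {u v : LPoset (Option A)}
    (e : u.carrier ≃o v.carrier) (he : ∀ x, v.lab (e x) = u.lab x) :
    u.uniqueStarL ↔ v.uniqueStarL := by
  constructor
  · rintro ⟨x, hx, hux⟩
    refine ⟨e x, show v.lab (e x) = none by rw [he]; exact hx, fun y hy => ?_⟩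
    have h2 := he (e.symm y)
    rw [OrderIso.apply_symm_apply] at h2
    have h3 : e.symm y = x := hux _ (h2.symm.trans hy)
    rw [← h3, OrderIso.apply_symm_apply]
  · rintro ⟨x, hx, hvx⟩
    refine ⟨e.symm x, ?_, fun y hy => ?_⟩
    · show u.lab (e.symm x) = none
      have h2 := he (e.symm x)
      rw [OrderIso.apply_symm_apply] at h2
      rw [← h2]; exact hx
    · have h3 : e y = x := hvx _ (show v.lab (e y) = none by rw [he]; exact hy)
      rw [← h3, OrderIso.symm_apply_apply]

/-- A pomset context: exactly one node labelled `*`. -/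
def Pomset.IsCtx {A : Type} : Pomset (Option A) → Prop :=
  Quotient.lift LPoset.uniqueStarL
    (fun _ _ h => propext (LPoset.uniqueStarL_congr h.choose h.choose_spec))

/-- Series-parallel pomset contexts. -/
def Pomset.IsSPCtx {A : Type} (C : Pomset (Option A)) : Prop := C.IsCtx ∧ C.IsSP

/-- Sequential (totally ordered) pomset contexts. -/
def Pomset.IsSeqCtx {A : Type} (C : Pomset (Option A)) : Prop := C.IsCtx ∧ C.IsWord

/-- The trivial context `*`. -/
def starCtx (A : Type) : Pomset (Option A) := Pomset.single (none : Option A)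

theorem option_get_eq_get {α : Type} {o₁ o₂ : Option α} (h : o₁ = o₂) (h₁ : o₁.isSome)
    (h₂ : o₂.isSome) : o₁.get h₁ = o₂.get h₂ := by subst h; rfl

/-- The order of `C[U]`: the orders of `C` (restricted away from `*`) and of `U`, with a
point of `C` below (resp. above) all of `U` when it is below (resp. above) the unique
`*`-node of `C`.  (For well-definedness of the order, the cross-relations are guarded by
the requirement that the star node is unique, which holds for every genuine context.) -/
def LPoset.insLe {A : Type} (c : LPoset (Option A)) (u : LPoset A) :
    ({x : c.carrier // c.lab x ≠ none} ⊕ u.carrier) →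
    ({x : c.carrier // c.lab x ≠ none} ⊕ u.carrier) → Prop
  | Sum.inl x, Sum.inl y => x.val ≤ y.val
  | Sum.inr x, Sum.inr y => x ≤ y
  | Sum.inl x, Sum.inr _ => c.uniqueStarL ∧ ∃ s, c.lab s = none ∧ x.val ≤ s
  | Sum.inr _, Sum.inl y => c.uniqueStarL ∧ ∃ s, c.lab s = none ∧ s ≤ y.val

/-- Insertion of a labelled poset `u` into the gap of a context `c`: the `*`-labelled
node is removed and `u` is put in its place, inheriting the order relations of `*`. -/
noncomputable def LPoset.insL {A : Type} (c : LPoset (Option A)) (u : LPoset A) :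
    LPoset A where
  carrier := {x : c.carrier // c.lab x ≠ none} ⊕ u.carrier
  fin := by classical exact inferInstance
  ord :=
    { le := LPoset.insLe c u
      lt := fun p q => LPoset.insLe c u p q ∧ ¬ LPoset.insLe c u q p
      lt_iff_le_not_ge := fun _ _ => Iff.rfl
      le_refl := by rintro (x | x) <;> exact le_refl _
      le_trans := by
        rintro (x | x) (y | y) (z | z) h1 h2
        · exact le_trans h1 h2
        · obtain ⟨hu, s, hs, hys⟩ := h2
          exact ⟨hu, s, hs, le_trans h1 hys⟩
        · obtain ⟨hu, s, hs, hxs⟩ := h1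
          obtain ⟨-, t, ht, htz⟩ := h2
          obtain ⟨w, hw, huniq⟩ := hu
          have hst : s = t := (huniq s hs).trans (huniq t ht).symm
          exact le_trans (hst ▸ hxs) htz
        · exact h1
        · obtain ⟨hu, s, hs, hsy⟩ := h1
          exact ⟨hu, s, hs, le_trans hsy h2⟩
        · obtain ⟨hu, s, hs, hsy⟩ := h1
          obtain ⟨-, t, ht, hyt⟩ := h2
          obtain ⟨w, hw, huniq⟩ := hu
          have hst : s = t := (huniq s hs).trans (huniq t ht).symm
          have hy : y.val = s := le_antisymm (hst.symm ▸ hyt) hsy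
          exact absurd (hy.symm ▸ hs) y.prop
        · exact h2
        · exact le_trans h1 h2
      le_antisymm := by
        rintro (x | x) (y | y) h1 h2
        · exact congrArg Sum.inl (Subtype.ext (le_antisymm h1 h2))
        · obtain ⟨hu, s, hs, hxs⟩ := h1
          obtain ⟨-, t, ht, htx⟩ := h2
          obtain ⟨w, hw, huniq⟩ := hu
          have hst : s = t := (huniq s hs).trans (huniq t ht).symm
          have hx : x.val = s := le_antisymm hxs (hst.symm ▸ htx)
          exact absurd (hx.symm ▸ hs) x.prop
        · obtain ⟨hu, s, hs, hsy⟩ := h1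
          obtain ⟨-, t, ht, hyt⟩ := h2
          obtain ⟨w, hw, huniq⟩ := hu
          have hst : s = t := (huniq s hs).trans (huniq t ht).symm
          have hy : y.val = s := le_antisymm (hst.symm ▸ hyt) hsy
          exact absurd (hy.symm ▸ hs) y.prop
        · exact congrArg Sum.inr (le_antisymm h1 h2) }
  lab := Sum.elim (fun x => (c.lab x.val).get (Option.isSome_iff_ne_none.mpr x.prop)) u.lab

/-- `Pomset.ins C U` is `C[U]`: plugging the pomset `U` into the gap of the context `C`. -/
noncomputable def Pomset.ins {A : Type} : Pomset (Option A) → Pomset A → Pomset A :=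
  Quotient.map₂ LPoset.insL (by
    rintro c₁ c₂ ⟨e, he⟩ u₁ u₂ ⟨f, hf⟩
    have hstar : c₁.uniqueStarL ↔ c₂.uniqueStarL := LPoset.uniqueStarL_congr e he
    refine ⟨{ toEquiv := Equiv.sumCongr
                (e.toEquiv.subtypeEquiv fun x => by
                  rw [show c₂.lab (e.toEquiv x) = c₁.lab x from he x]) f.toEquiv
              map_rel_iff' := ?_ }, ?_⟩
    · rintro (x | x) (y | y)
      · exact e.le_iff_le
      · show (c₂.uniqueStarL ∧ ∃ s, c₂.lab s = none ∧ (e x.val : c₂.carrier) ≤ s) ↔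
             (c₁.uniqueStarL ∧ ∃ s, c₁.lab s = none ∧ x.val ≤ s)
        constructor
        · rintro ⟨hu, s, hs, hxs⟩
          refine ⟨hstar.mpr hu, e.symm s, ?_, ?_⟩
          · have h2 := he (e.symm s)
            rw [OrderIso.apply_symm_apply] at h2
            rw [← h2]; exact hs
          · exact e.le_iff_le.mp (by rw [OrderIso.apply_symm_apply]; exact hxs)
        · rintro ⟨hu, s, hs, hxs⟩
          exact ⟨hstar.mp hu, e s, by rw [he]; exact hs, e.le_iff_le.mpr hxs⟩
      · show (c₂.uniqueStarL ∧ ∃ s, c₂.lab s = none ∧ s ≤ (e y.val : c₂.carrier)) ↔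
             (c₁.uniqueStarL ∧ ∃ s, c₁.lab s = none ∧ s ≤ y.val)
        constructor
        · rintro ⟨hu, s, hs, hsy⟩
          refine ⟨hstar.mpr hu, e.symm s, ?_, ?_⟩
          · have h2 := he (e.symm s)
            rw [OrderIso.apply_symm_apply] at h2
            rw [← h2]; exact hs
          · exact e.le_iff_le.mp (by rw [OrderIso.apply_symm_apply]; exact hsy)
        · rintro ⟨hu, s, hs, hsy⟩
          exact ⟨hstar.mp hu, e s, by rw [he]; exact hs, e.le_iff_le.mpr hsy⟩
      · exact f.le_iff_le
    · rintro (x | x)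
      · exact option_get_eq_get (he x.val) _ _
      · exact hf x)

/-! ### Pomset languages -/

abbrev Lang (A : Type) := Set (Pomset A)

def Lang.seq {A : Type} (L K : Lang A) : Lang A :=
  {W | ∃ U ∈ L, ∃ V ∈ K, W = Pomset.seq U V}

def Lang.par {A : Type} (L K : Lang A) : Lang A :=
  {W | ∃ U ∈ L, ∃ V ∈ K, W = Pomset.par U V}

def Lang.pow {A : Type} (L : Lang A) : ℕ → Lang A
  | 0 => {Pomset.empty A}
  | n + 1 => Lang.seq (Lang.pow L n) L

def Lang.star {A : Type} (L : Lang A) : Lang A := ⋃ n, L.pow n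

/-- Application of a context to a language: `C[L] = {C[U] : U ∈ L}`. -/
def Ctx.img {A : Type} (C : Pomset (Option A)) (L : Lang A) : Lang A :=
  {W | ∃ U ∈ L, W = C.ins U}

/-! ### CKA terms and semantics -/

inductive Term (A : Type) : Type
  | zero : Term A
  | one : Term A
  | var : A → Term A
  | add : Term A → Term A → Term A
  | seq : Term A → Term A → Term A
  | par : Term A → Term A → Term A
  | star : Term A → Term A

/-- Pomset language semantics of CKA terms. -/
def Term.lang {A : Type} : Term A → Lang A
  | .zero => ∅
  | .one => {Pomset.empty A}
  | .var a => {Pomset.single a}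
  | .add e f => e.lang ∪ f.lang
  | .seq e f => Lang.seq e.lang f.lang
  | .par e f => Lang.par e.lang f.lang
  | .star e => Lang.star e.lang

/-- Sets of hypotheses: a hypothesis `e ≤ f` is the pair `(e, f)`. -/
abbrev HypSet (A : Type) := Set (Term A × Term A)

/-- The congruence `≡^H` on CKA terms generated by the CKA axioms and the hypotheses `H`
(the constructor `hyp` encodes `e ≦^H f`, i.e. `e + f ≡^H f`, for `e ≤ f ∈ H`). -/
inductive CongH {A : Type} (H : HypSet A) : Term A → Term A → Prop
  | refl (e) : CongH H e e
  | symm {e f} : CongH H e f → CongH H f e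
  | trans {e f g} : CongH H e f → CongH H f g → CongH H e g
  | addCong {e e' f f'} : CongH H e e' → CongH H f f' → CongH H (.add e f) (.add e' f')
  | seqCong {e e' f f'} : CongH H e e' → CongH H f f' → CongH H (.seq e f) (.seq e' f')
  | parCong {e e' f f'} : CongH H e e' → CongH H f f' → CongH H (.par e f) (.par e' f')
  | starCong {e e'} : CongH H e e' → CongH H (.star e) (.star e')
  | addZero (e) : CongH H (.add e .zero) e
  | addIdem (e) : CongH H (.add e e) e
  | addComm (e f) : CongH H (.add e f) (.add f e)
  | addAssoc (e f g) : CongH H (.add e (.add f g)) (.add (.add e f) g)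
  | seqAssoc (e f g) : CongH H (.seq e (.seq f g)) (.seq (.seq e f) g)
  | seqDistL (e f g) : CongH H (.seq e (.add f g)) (.add (.seq e f) (.seq e g))
  | seqDistR (e f g) : CongH H (.seq (.add e f) g) (.add (.seq e g) (.seq f g))
  | seqOneR (e) : CongH H (.seq e .one) e
  | seqOneL (e) : CongH H (.seq .one e) e
  | seqZeroR (e) : CongH H (.seq e .zero) .zero
  | seqZeroL (e) : CongH H (.seq .zero e) .zero
  | parComm (e f) : CongH H (.par e f) (.par f e)
  | parOne (e) : CongH H (.par e .one) e
  | parZero (e) : CongH H (.par e .zero) .zero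
  | parAssoc (e f g) : CongH H (.par e (.par f g)) (.par (.par e f) g)
  | parDist (e f g) : CongH H (.par e (.add f g)) (.add (.par e f) (.par e g))
  | starUnfoldL (e) : CongH H (.add .one (.seq e (.star e))) (.star e)
  | starUnfoldR (e) : CongH H (.add .one (.seq (.star e) e)) (.star e)
  | lfpL {e f g} : CongH H (.add (.add e (.seq f g)) g) g →
      CongH H (.add (.seq (.star f) e) g) g
  | lfpR {e f g} : CongH H (.add (.add e (.seq f g)) f) f →
      CongH H (.add (.seq e (.star g)) f) f
  | hyp {e f} : (e, f) ∈ H → CongH H (.add e f) f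

/-- `e ≦^H f`, the natural order `e + f ≡^H f`. -/
def LeH {A : Type} (H : HypSet A) (e f : Term A) : Prop := CongH H (.add e f) f

/-- The `H`-closure of a pomset language, as an inductive predicate: the smallest language
containing `L` such that for all `e ≤ f ∈ H` and series-parallel contexts `C`,
if `C[⟦f⟧] ⊆ cl` then `C[⟦e⟧] ⊆ cl`. -/
inductive closure {A : Type} (H : HypSet A) (L : Lang A) : Pomset A → Prop
  | base {U} : U ∈ L → closure H L U
  | step {e f : Term A} (hef : (e, f) ∈ H) {C : Pomset (Option A)} (hC : C.IsSPCtx)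
      (hf : ∀ V ∈ f.lang, closure H L (C.ins V)) {U} (hU : U ∈ e.lang) :
      closure H L (C.ins U)

/-- `cl H L` is the `H`-closure of `L`. -/
def cl {A : Type} (H : HypSet A) (L : Lang A) : Lang A := {U | closure H L U}

/-- The sequential closure: like `cl` but only sequential contexts are used. -/
inductive seqClosure {A : Type} (H : HypSet A) (L : Lang A) : Pomset A → Prop
  | base {U} : U ∈ L → seqClosure H L U
  | step {e f : Term A} (hef : (e, f) ∈ H) {C : Pomset (Option A)} (hC : C.IsSeqCtx)
      (hf : ∀ V ∈ f.lang, seqClosure H L (C.ins V)) {U} (hU : U ∈ e.lang) :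
      seqClosure H L (C.ins U)

def seqCl {A : Type} (H : HypSet A) (L : Lang A) : Lang A := {U | seqClosure H L U}

/-! ### Implication, completeness, reductions -/

/-- `H` implies `H'`: every hypothesis of `H'` is derivable from `H`. -/
def Implies {A : Type} (H H' : HypSet A) : Prop := ∀ p ∈ H', LeH H p.1 p.2

/-- `H` is complete: semantic equivalence implies axiomatic equivalence. -/
def Complete {A : Type} (H : HypSet A) : Prop :=
  ∀ e f : Term A, cl H e.lang = cl H f.lang → CongH H e f

/-- A reduction from `H` to `H'` (presupposing that `H` implies `H'`). -/
structure IsReduction {A : Type} (H H' : HypSet A) (r : Term A → Term A) : Prop where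
  implies : Implies H H'
  equiv : ∀ e, CongH H e (r e)
  reflect : ∀ e f : Term A, cl H e.lang = cl H f.lang → cl H' (r e).lang = cl H' (r f).lang

def Reduces {A : Type} (H H' : HypSet A) : Prop := ∃ r, IsReduction H H' r

/-- A strong reduction from `H` to `H'`. -/
structure IsStrongReduction {A : Type} (H H' : HypSet A) (r : Term A → Term A)
    extends IsReduction H H' r : Prop where
  strong : ∀ e : Term A, cl H e.lang = cl H' (r e).lang

def StronglyReduces {A : Type} (H H' : HypSet A) : Prop := ∃ r, IsStrongReduction H H' r

/-- `H` factorises into `H₀` and `H₁`. -/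
def Factorises {A : Type} (H H₀ H₁ : HypSet A) : Prop :=
  Implies H H₀ ∧ Implies H H₁ ∧ ∀ L : Lang A, L ⊆ SPset A → cl H L = cl H₁ (cl H₀ L)

/-! ### The exchange hypotheses and sp-subsumption -/

/-- The exchange hypotheses `(e∥f)·(g∥h) ≤ (e·g)∥(f·h)`. -/
def exch (A : Type) : HypSet A :=
  {p | ∃ e f g h : Term A,
    p = (Term.seq (.par e f) (.par g h), Term.par (.seq e g) (.seq f h))}

/-- `⊑^sp`: the smallest precongruence on series-parallel pomsets satisfying the
exchange inequality. -/
inductive spSub {A : Type} : Pomset A → Pomset A → Prop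
  | refl {U : Pomset A} : U.IsSP → spSub U U
  | trans {U V W} : spSub U V → spSub V W → spSub U W
  | seqCong {U V U' V'} : spSub U V → spSub U' V' → spSub (Pomset.seq U U') (Pomset.seq V V')
  | parCong {U V U' V'} : spSub U V → spSub U' V' → spSub (Pomset.par U U') (Pomset.par V V')
  | exch {U V W X : Pomset A} : U.IsSP → V.IsSP → W.IsSP → X.IsSP →
      spSub (Pomset.seq (Pomset.par U V) (Pomset.par W X))
            (Pomset.par (Pomset.seq U W) (Pomset.seq V X))

/-! ### KA terms, grounded hypotheses, sequential reductions -/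

/-- A term is a KA term when it contains no `∥`. -/
def Term.noPar {A : Type} : Term A → Prop
  | .zero => True
  | .one => True
  | .var _ => True
  | .add e f => e.noPar ∧ f.noPar
  | .seq e f => e.noPar ∧ f.noPar
  | .par _ _ => False
  | .star e => e.noPar

/-- A non-empty word. -/
def IsNonemptyWord {A : Type} (W : Pomset A) : Prop := W.IsWord ∧ W ≠ Pomset.empty A

/-- A set of hypotheses is grounded when in each hypothesis `e ≤ f`, `e` is a KA term and
`⟦f⟧ = {W}` for a non-empty word `W`. -/
def Grounded {A : Type} (H : HypSet A) : Prop :=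
  ∀ p ∈ H, p.1.noPar ∧ ∃ W : Pomset A, IsNonemptyWord W ∧ p.2.lang = {W}

/-- `≡_KA^H`: the congruence on terms generated by the axioms of `≡` not involving `∥`
together with the hypotheses of `H`. -/
inductive KACong {A : Type} (H : HypSet A) : Term A → Term A → Prop
  | refl (e) : KACong H e e
  | symm {e f} : KACong H e f → KACong H f e
  | trans {e f g} : KACong H e f → KACong H f g → KACong H e g
  | addCong {e e' f f'} : KACong H e e' → KACong H f f' → KACong H (.add e f) (.add e' f')
  | seqCong {e e' f f'} : KACong H e e' → KACong H f f' → KACong H (.seq e f) (.seq e' f')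
  | starCong {e e'} : KACong H e e' → KACong H (.star e) (.star e')
  | addZero (e) : KACong H (.add e .zero) e
  | addIdem (e) : KACong H (.add e e) e
  | addComm (e f) : KACong H (.add e f) (.add f e)
  | addAssoc (e f g) : KACong H (.add e (.add f g)) (.add (.add e f) g)
  | seqAssoc (e f g) : KACong H (.seq e (.seq f g)) (.seq (.seq e f) g)
  | seqDistL (e f g) : KACong H (.seq e (.add f g)) (.add (.seq e f) (.seq e g))
  | seqDistR (e f g) : KACong H (.seq (.add e f) g) (.add (.seq e g) (.seq f g))
  | seqOneR (e) : KACong H (.seq e .one) e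
  | seqOneL (e) : KACong H (.seq .one e) e
  | seqZeroR (e) : KACong H (.seq e .zero) .zero
  | seqZeroL (e) : KACong H (.seq .zero e) .zero
  | starUnfoldL (e) : KACong H (.add .one (.seq e (.star e))) (.star e)
  | starUnfoldR (e) : KACong H (.add .one (.seq (.star e) e)) (.star e)
  | lfpL {e f g} : KACong H (.add (.add e (.seq f g)) g) g →
      KACong H (.add (.seq (.star f) e) g) g
  | lfpR {e f g} : KACong H (.add (.add e (.seq f g)) f) f →
      KACong H (.add (.seq e (.star g)) f) f
  | hyp {e f} : (e, f) ∈ H → KACong H (.add e f) f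

/-- A sequential reduction from `H` to `H'`. -/
structure IsSeqReduction {A : Type} (H H' : HypSet A) (r : Term A → Term A) : Prop where
  implies : Implies H H'
  equiv : ∀ e : Term A, e.noPar → KACong H e (r e)
  closure_eq : ∀ e : Term A, e.noPar → seqCl H e.lang = seqCl H' (r e).lang

/-- Extension of a map on (KA) terms to all CKA terms, homomorphically on `∥`. -/
def parExt {A : Type} (r : Term A → Term A) : Term A → Term A
  | .par e f => .par (parExt r e) (parExt r f)
  | e => r e

/-! ### Inductive characterisation of sp contexts -/

/-- The generators of series-parallel contexts (Lemma: `PC^sp` is the smallest such set). -/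
inductive GenCtx {A : Type} : Pomset (Option A) → Prop
  | star : GenCtx (Pomset.single (none : Option A))
  | seqL {U : Pomset A} {C} : U.IsSP → GenCtx C → GenCtx (Pomset.seq (Pomset.map some U) C)
  | seqR {C} {V : Pomset A} : GenCtx C → V.IsSP → GenCtx (Pomset.seq C (Pomset.map some V))
  | par {U : Pomset A} {C} : U.IsSP → GenCtx C → GenCtx (Pomset.par (Pomset.map some U) C)

/-! ### Reification -/

/-- Homomorphic extension of a letter map to terms. -/
def rTerm {A : Type} (r : A → Term A) : Term A → Term A
  | .zero => .zero
  | .one => .one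
  | .var a => r a
  | .add e f => .add (rTerm r e) (rTerm r f)
  | .seq e f => .seq (rTerm r e) (rTerm r f)
  | .par e f => .par (rTerm r e) (rTerm r f)
  | .star e => .star (rTerm r e)

/-- All letters of a term lie in `Γ`. -/
def TermOver {A : Type} (Γ : Set A) : Term A → Prop
  | .zero => True
  | .one => True
  | .var a => a ∈ Γ
  | .add e f => TermOver Γ e ∧ TermOver Γ f
  | .seq e f => TermOver Γ e ∧ TermOver Γ f
  | .par e f => TermOver Γ e ∧ TermOver Γ f
  | .star e => TermOver Γ e

/-- Extension of a letter map `r` to (series-parallel) pomsets, as a relation: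
`rMap r U V` means `V ∈ r(U)`. -/
inductive rMap {A : Type} (r : A → Term A) : Pomset A → Pomset A → Prop
  | one : rMap r (Pomset.empty A) (Pomset.empty A)
  | var (a : A) {V} : V ∈ (r a).lang → rMap r (Pomset.single a) V
  | seq {U U' V V'} : rMap r U V → rMap r U' V' →
      rMap r (Pomset.seq U U') (Pomset.seq V V')
  | par {U U' V V'} : rMap r U V → rMap r U' V' →
      rMap r (Pomset.par U U') (Pomset.par V V')

/-- Image of a language under (the pomset extension of) `r`. -/
def rImg {A : Type} (r : A → Term A) (L : Lang A) : Lang A := {V | ∃ U ∈ L, rMap r U V}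

/-- Series-parallel pomsets over the subalphabet `Γ`. -/
def SPover {A : Type} (Γ : Set A) : Lang A := {U | U.IsSP ∧ U.Over Γ}

/-- `r : Σ → Term Γ` is a reification from `H` to `H'`. -/
structure IsReification {A : Type} (Γ : Set A) (H H' : HypSet A) (r : A → Term A) : Prop where
  toGamma : ∀ a : A, TermOver Γ (r a)
  equiv : ∀ a : A, CongH H (r a) (.var a)
  expansive : ∀ a ∈ Γ, LeH (∅ : HypSet A) (.var a) (r a)
  preserves : ∀ L : Lang A, L ⊆ SPover Γ → cl H' L ⊆ SPover Γ
  hyps : ∀ p ∈ H, LeH H' (rTerm r p.1) (rTerm r p.2)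

end CKAH

namespace CKAH

/-! A context `C'` with `C'[1] = v` is `v` with one `*`-node inserted at a gap: the node sits
above a set `D` and below a set `U`, where every point of `D` is strictly below every point of
`U`. A subsumption `v ⊑ C[1]` transports the gap of `*` in `C` to such a pair in `v`, and any
insertion of `*` into `v` above `D` and below `U` is subsumed by `C`. The order generated by `v`
and these relations is one such insertion, but adding `*` this way may destroy series-parallelism.
For series-parallel `v` one inserts `*` by recursion instead: in `u · w` it goes into `w` as soon
as `D` meets `w`, and into `u` otherwise; in `u ∥ w` a nonempty `D` and a nonempty `U` lie in the
same factor, while for an empty `D` or `U` the node can go before or after everything. -/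

section Precedes

variable {α β : Type*} [Preorder α] [Preorder β] {D U : Set α}

/-- `D` precedes `U` when every point of `D` is strictly below every point of `U`. Such pairs are
the gaps into which a `*`-node can be inserted. -/
def Precedes (D U : Set α) : Prop := ∀ d ∈ D, ∀ u ∈ U, d < u

theorem Precedes.image {f : α → β} (hf : StrictMono f) (h : Precedes D U) :
    Precedes (f '' D) (f '' U) := by
  rintro _ ⟨d, hd, rfl⟩ _ ⟨u, hu, rfl⟩
  exact hf (h d hd u hu)

theorem Precedes.preimage (f : β ↪o α) (h : Precedes D U) : Precedes (f ⁻¹' D) (f ⁻¹' U) :=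
  fun _ hd _ hu => f.lt_iff_lt.mp (h _ hd _ hu)

theorem Precedes.eq_empty_or_eq_empty [Subsingleton α] (h : Precedes D U) : D = ∅ ∨ U = ∅ := by
  by_contra! hne
  obtain ⟨⟨d, hd⟩, ⟨u, hu⟩⟩ := hne
  exact (h d hd u hu).ne (Subsingleton.elim d u)

end Precedes

theorem Pomset.map_empty {A B : Type} (g : A → B) : (Pomset.empty A).map g = Pomset.empty B :=
  Quotient.sound ⟨OrderIso.refl _, fun x => x.elim0⟩

theorem Pomset.map_seq {A B : Type} (g : A → B) (U V : Pomset A) :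
    (U.seq V).map g = (U.map g).seq (V.map g) := by
  induction U, V using Quotient.inductionOn₂
  exact Quotient.sound ⟨OrderIso.refl _, by rintro (x | x) <;> rfl⟩

theorem Pomset.map_par {A B : Type} (g : A → B) (U V : Pomset A) :
    (U.par V).map g = (U.map g).par (V.map g) := by
  induction U, V using Quotient.inductionOn₂
  exact Quotient.sound ⟨OrderIso.refl _, by rintro (x | x) <;> rfl⟩

theorem Pomset.IsSP.map {A B : Type} (g : A → B) {V : Pomset A} (h : V.IsSP) :
    (V.map g).IsSP := by
  induction h with
  | empty => exact Pomset.map_empty g ▸ .empty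
  | single a => exact .single (g a)
  | seq _ _ hU hV => exact Pomset.map_seq g _ _ ▸ .seq hU hV
  | par _ _ hU hV => exact Pomset.map_par g _ _ ▸ .par hU hV

variable {A : Type}

namespace LPoset

/-- The inclusion of the first factor into a sequential composition. -/
def seqInl (u v : LPoset A) : u.carrier ↪o (u.seqL v).carrier :=
  RelEmbedding.sumLexInl (· ≤ ·) (· ≤ ·)

/-- The inclusion of the second factor into a sequential composition. -/
def seqInr (u v : LPoset A) : v.carrier ↪o (u.seqL v).carrier :=
  RelEmbedding.sumLexInr (· ≤ ·) (· ≤ ·)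

/-- The inclusion of the first factor into a parallel composition. -/
def parInl (u v : LPoset A) : u.carrier ↪o (u.parL v).carrier :=
  RelEmbedding.sumLiftRelInl (· ≤ ·) (· ≤ ·)

/-- The inclusion of the second factor into a parallel composition. -/
def parInr (u v : LPoset A) : v.carrier ↪o (u.parL v).carrier :=
  RelEmbedding.sumLiftRelInr (· ≤ ·) (· ≤ ·)

variable {u v : LPoset A} (x : u.carrier) (y : v.carrier)

theorem seqInl_le_seqInr : seqInl u v x ≤ seqInr u v y := Sum.Lex.inl_le_inr x y

theorem not_seqInr_lt_seqInl : ¬ seqInr u v y < seqInl u v x := (seqInl_le_seqInr x y).not_gt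

theorem not_parInl_lt_parInr : ¬ parInl u v x < parInr u v y := Sum.not_inl_lt_inr

theorem not_parInr_lt_parInl : ¬ parInr u v y < parInl u v x := Sum.not_inr_lt_inl

end LPoset

open LPoset

/-- An exhibition of `c` as the labelled poset `v` with a single `*`-node inserted. -/
structure StarExtension (v : LPoset A) (c : LPoset (Option A)) where
  emb : v.carrier ↪o c.carrier
  star : c.carrier
  lab_emb : ∀ x, c.lab (emb x) = some (v.lab x)
  lab_star : c.lab star = none
  eq_star_or_mem_range : ∀ y, y = star ∨ y ∈ Set.range emb

namespace StarExtension

section Basic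

variable {v : LPoset A} {c : LPoset (Option A)}

/-- The points of `v` below the inserted `*`-node. -/
def lower (E : StarExtension v c) : Set v.carrier := {x | E.emb x ≤ E.star}

/-- The points of `v` above the inserted `*`-node. -/
def upper (E : StarExtension v c) : Set v.carrier := {x | E.star ≤ E.emb x}

theorem emb_ne_star (E : StarExtension v c) (x : v.carrier) : E.emb x ≠ E.star := fun h => by
  simpa [h, E.lab_star] using E.lab_emb x

theorem precedes_lower_upper (E : StarExtension v c) : Precedes E.lower E.upper := fun d hd _ hu =>
  E.emb.lt_iff_lt.mp ((lt_of_le_of_ne hd (E.emb_ne_star d)).trans_le hu)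

theorem uniqueStarL (E : StarExtension v c) : c.uniqueStarL := by
  refine ⟨E.star, E.lab_star, fun y hy => ?_⟩
  rcases E.eq_star_or_mem_range y with h | ⟨x, rfl⟩
  · exact h
  · simp [E.lab_emb] at hy

/-- The points of `c` are those of `v` together with the `*`-node, which corresponds to `none`. -/
noncomputable def optionEquiv (E : StarExtension v c) : Option v.carrier ≃ c.carrier :=
  Equiv.ofBijective (fun o => o.elim E.star E.emb) <| by
    constructor
    · rintro (_ | x) (_ | y) h
      · rfl
      · exact absurd h.symm (E.emb_ne_star y)
      · exact absurd h (E.emb_ne_star x)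
      · exact congrArg some (E.emb.injective h)
    · intro y
      rcases E.eq_star_or_mem_range y with rfl | ⟨x, rfl⟩
      · exact ⟨none, rfl⟩
      · exact ⟨some x, rfl⟩

theorem optionEquiv_symm_star (E : StarExtension v c) : E.optionEquiv.symm E.star = none :=
  E.optionEquiv.symm_apply_apply none

theorem optionEquiv_symm_emb (E : StarExtension v c) (x : v.carrier) :
    E.optionEquiv.symm (E.emb x) = some x :=
  E.optionEquiv.symm_apply_apply (some x)

theorem iso_insL_emptyL (E : StarExtension v c) : v.Iso (c.insL (emptyL A)) := by
  have lab_ne_none (x) : c.lab (E.emb x) ≠ none := by simp [E.lab_emb]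
  let f : v.carrier ↪o (c.insL (emptyL A)).carrier :=
    OrderEmbedding.ofMapLEIff (fun x => Sum.inl ⟨E.emb x, lab_ne_none x⟩)
      fun _ _ => E.emb.le_iff_le
  have surjective_f : Function.Surjective f := by
    rintro (⟨y, hy⟩ | y)
    · rcases E.eq_star_or_mem_range y with rfl | ⟨x, rfl⟩
      · exact absurd E.lab_star hy
      · exact ⟨x, rfl⟩
    · exact y.elim0
  refine ⟨RelIso.ofSurjective f surjective_f, fun x => ?_⟩
  exact Option.some_injective _ ((Option.some_get _).trans (E.lab_emb x))

theorem subL_of_subset (E : StarExtension v c) {v₀ : LPoset A} {c₀ : LPoset (Option A)}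
    (E₀ : StarExtension v₀ c₀) (f : v₀.carrier ≃ v.carrier) (f_lab : ∀ x, v.lab (f x) = v₀.lab x)
    (f_mono : Monotone f) (h_lower : f '' E₀.lower ⊆ E.lower)
    (h_upper : f '' E₀.upper ⊆ E.upper) : c.subL c₀ := by
  let g : c₀.carrier ≃ c.carrier :=
    E₀.optionEquiv.symm.trans (f.optionCongr.trans E.optionEquiv)
  have g_star : g E₀.star = E.star :=
    congrArg (E.optionEquiv ∘ f.optionCongr) E₀.optionEquiv_symm_star
  have g_emb (x) : g (E₀.emb x) = E.emb (f x) :=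
    congrArg (E.optionEquiv ∘ f.optionCongr) (E₀.optionEquiv_symm_emb x)
  refine ⟨g, fun x => ?_, fun x y hxy => ?_⟩
  · rcases E₀.eq_star_or_mem_range x with rfl | ⟨x, rfl⟩
    · rw [g_star, E.lab_star, E₀.lab_star]
    · rw [g_emb, E.lab_emb, E₀.lab_emb, f_lab]
  · rcases E₀.eq_star_or_mem_range x with rfl | ⟨x, rfl⟩ <;>
      rcases E₀.eq_star_or_mem_range y with rfl | ⟨y, rfl⟩
    · exact le_rfl
    · rw [g_star, g_emb]
      exact h_upper ⟨y, hxy, rfl⟩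
    · rw [g_star, g_emb]
      exact h_lower ⟨x, hxy, rfl⟩
    · rw [g_emb, g_emb]
      exact E.emb.monotone (f_mono (E₀.emb.le_iff_le.mp hxy))

end Basic

/-- Every context `c` is an extension of `c[1]`. -/
noncomputable def ofUniqueStarL {c : LPoset (Option A)} (hc : c.uniqueStarL) :
    StarExtension (c.insL (emptyL A)) c where
  emb := OrderEmbedding.ofMapLEIff (Sum.elim Subtype.val fun i => i.elim0) <| by
    rintro (x | x) (y | y)
    · exact Iff.rfl
    all_goals first | exact x.elim0 | exact y.elim0
  star := hc.choose
  lab_emb := by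
    rintro (x | x)
    · exact (Option.some_get _).symm
    · exact x.elim0
  lab_star := hc.choose_spec.1
  eq_star_or_mem_range y := by
    by_cases hy : c.lab y = none
    · exact .inl (hc.choose_spec.2 y hy)
    · exact .inr ⟨.inl ⟨y, hy⟩, rfl⟩

section Constructions

variable {u : LPoset A} {c : LPoset (Option A)}

/-- An extension of `u`, read as an extension of an isomorphic labelled poset. -/
def ofIso {w : LPoset A} (E : StarExtension u c) (e : u.carrier ≃o w.carrier)
    (he : ∀ x, w.lab (e x) = u.lab x) : StarExtension w c where
  emb := e.symm.toOrderEmbedding.trans E.emb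
  star := E.star
  lab_emb x := (E.lab_emb (e.symm x)).trans (by rw [← he, e.apply_symm_apply])
  lab_star := E.lab_star
  eq_star_or_mem_range y := (E.eq_star_or_mem_range y).imp_right fun ⟨x, hx⟩ =>
    ⟨e x, by simpa using hx⟩

/-- The extension `* · v` of `v`. -/
def before (v : LPoset A) : StarExtension v ((singleL none).seqL (v.mapL some)) where
  emb := seqInr (singleL none) (v.mapL some)
  star := seqInl (singleL none) (v.mapL some) ⟨⟩
  lab_emb _ := rfl
  lab_star := rfl
  eq_star_or_mem_range := by
    rintro (_ | x)
    · exact .inl rfl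
    · exact .inr ⟨x, rfl⟩

/-- The extension `v · *` of `v`. -/
def after (v : LPoset A) : StarExtension v ((v.mapL some).seqL (singleL none)) where
  emb := seqInl (v.mapL some) (singleL none)
  star := seqInr (v.mapL some) (singleL none) ⟨⟩
  lab_emb _ := rfl
  lab_star := rfl
  eq_star_or_mem_range := by
    rintro (x | _)
    · exact .inr ⟨x, rfl⟩
    · exact .inl rfl

/-- The extension `c · v` of `u · v`, for an extension `c` of `u`. -/
def seqLeft (E : StarExtension u c) (v : LPoset A) :
    StarExtension (u.seqL v) (c.seqL (v.mapL some)) where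
  emb := RelEmbedding.sumLexMap E.emb (RelEmbedding.refl _)
  star := seqInl c (v.mapL some) E.star
  lab_emb := by
    rintro (x | x)
    · exact E.lab_emb x
    · rfl
  lab_star := E.lab_star
  eq_star_or_mem_range := by
    rintro (y | y)
    · rcases E.eq_star_or_mem_range y with rfl | ⟨x, rfl⟩
      · exact .inl rfl
      · exact .inr ⟨seqInl u v x, rfl⟩
    · exact .inr ⟨seqInr u v y, rfl⟩

/-- The extension `v · c` of `v · u`, for an extension `c` of `u`. -/
def seqRight (E : StarExtension u c) (v : LPoset A) :
    StarExtension (v.seqL u) ((v.mapL some).seqL c) where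
  emb := RelEmbedding.sumLexMap (RelEmbedding.refl _) E.emb
  star := seqInr (v.mapL some) c E.star
  lab_emb := by
    rintro (x | x)
    · rfl
    · exact E.lab_emb x
  lab_star := E.lab_star
  eq_star_or_mem_range := by
    rintro (y | y)
    · exact .inr ⟨seqInl v u y, rfl⟩
    · rcases E.eq_star_or_mem_range y with rfl | ⟨x, rfl⟩
      · exact .inl rfl
      · exact .inr ⟨seqInr v u x, rfl⟩

/-- The extension `c ∥ v` of `u ∥ v`, for an extension `c` of `u`. -/
def parLeft (E : StarExtension u c) (v : LPoset A) :
    StarExtension (u.parL v) (c.parL (v.mapL some)) where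
  emb := RelEmbedding.sumLiftRelMap E.emb (RelEmbedding.refl _)
  star := parInl c (v.mapL some) E.star
  lab_emb := by
    rintro (x | x)
    · exact E.lab_emb x
    · rfl
  lab_star := E.lab_star
  eq_star_or_mem_range := by
    rintro (y | y)
    · rcases E.eq_star_or_mem_range y with rfl | ⟨x, rfl⟩
      · exact .inl rfl
      · exact .inr ⟨parInl u v x, rfl⟩
    · exact .inr ⟨parInr u v y, rfl⟩

end Constructions

end StarExtension

section Free

variable {v : LPoset A} {D U : Set v.carrier}

/-- The smallest relation on `v` with an extra point `none` that extends the order of `v` and puts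
`none` above `D` and below `U`. It is transitive because `D` precedes `U`. -/
def starLe (D U : Set v.carrier) : Option v.carrier → Option v.carrier → Prop
  | some x, some y => x ≤ y
  | none, none => True
  | some x, none => ∃ d ∈ D, x ≤ d
  | none, some y => ∃ u ∈ U, u ≤ y

theorem starLe_refl (D U : Set v.carrier) : ∀ p, starLe D U p p
  | none => trivial
  | some x => le_refl x

theorem starLe_trans (h : Precedes D U) :
    ∀ {p q r}, starLe D U p q → starLe D U q r → starLe D U p r
  | none, _, none, _, _ => trivial
  | none, none, some _, _, hqr => hqr
  | none, some _, some _, ⟨u, hu, hux⟩, hqr => ⟨u, hu, hux.trans hqr⟩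
  | some _, none, none, hpq, _ => hpq
  | some _, some _, none, hpq, ⟨d, hd, hyd⟩ => ⟨d, hd, le_trans hpq hyd⟩
  | some _, none, some _, ⟨d, hd, hxd⟩, ⟨u, hu, huz⟩ => (hxd.trans (h d hd u hu).le).trans huz
  | some _, some _, some _, hpq, hqr => le_trans (α := v.carrier) hpq hqr

theorem starLe_antisymm (h : Precedes D U) :
    ∀ {p q}, starLe D U p q → starLe D U q p → p = q
  | none, none, _, _ => rfl
  | none, some _, ⟨u, hu, huy⟩, ⟨d, hd, hyd⟩ => absurd (huy.trans hyd) (h d hd u hu).not_ge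
  | some _, none, ⟨d, hd, hxd⟩, ⟨u, hu, hux⟩ => absurd (hux.trans hxd) (h d hd u hu).not_ge
  | some _, some _, hpq, hqp => congrArg some (le_antisymm (α := v.carrier) hpq hqp)

/-- The labelled poset `v` with a `*`-node freely inserted above `D` and below `U`. -/
def LPoset.insertStar (v : LPoset A) {D U : Set v.carrier} (h : Precedes D U) :
    LPoset (Option A) where
  carrier := Option v.carrier
  ord :=
    { le := starLe D U
      lt := fun p q => starLe D U p q ∧ ¬ starLe D U q p
      lt_iff_le_not_ge := fun _ _ => Iff.rfl
      le_refl := starLe_refl D U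
      le_trans := fun _ _ _ => starLe_trans h
      le_antisymm := fun _ _ => starLe_antisymm h }
  lab := Option.map v.lab

theorem exists_starExtension (h : Precedes D U) :
    ∃ (c : LPoset (Option A)) (E : StarExtension v c), D ⊆ E.lower ∧ U ⊆ E.upper :=
  ⟨v.insertStar h,
    { emb := OrderEmbedding.ofMapLEIff (β := (v.insertStar h).carrier) some fun _ _ => Iff.rfl
      star := none
      lab_emb := fun _ => rfl
      lab_star := rfl
      eq_star_or_mem_range := fun
        | none => .inl rfl
        | some x => .inr ⟨x, rfl⟩ },
    fun d hd => ⟨d, hd, le_rfl⟩, fun u hu => ⟨u, hu, le_rfl⟩⟩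

end Free

/-- Some series-parallel extension of `v` has its `*`-node above `D` and below `U`. -/
def HasSPExtension (v : LPoset A) (D U : Set v.carrier) : Prop :=
  ∃ c : LPoset (Option A), Pomset.IsSP (⟦c⟧ : Pomset (Option A)) ∧
    ∃ E : StarExtension v c, D ⊆ E.lower ∧ U ⊆ E.upper

namespace HasSPExtension

variable {u v : LPoset A}

theorem of_iso {D U : Set v.carrier} (e : u.carrier ≃o v.carrier)
    (he : ∀ x, v.lab (e x) = u.lab x) (h : HasSPExtension u (e ⁻¹' D) (e ⁻¹' U)) :
    HasSPExtension v D U := by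
  obtain ⟨c, hc, E, hD, hU⟩ := h
  refine ⟨c, hc, E.ofIso e he, fun d hd => ?_, fun w hw => ?_⟩
  · exact hD (show e (e.symm d) ∈ D by rwa [e.apply_symm_apply])
  · exact hU (show e (e.symm w) ∈ U by rwa [e.apply_symm_apply])

theorem of_eq_empty (hv : Pomset.IsSP (⟦v⟧ : Pomset A)) {D U : Set v.carrier}
    (h : D = ∅ ∨ U = ∅) : HasSPExtension v D U := by
  rcases h with rfl | rfl
  · exact ⟨_, .seq (.single none) (hv.map some), .before v, Set.empty_subset _,
      fun _ _ => seqInl_le_seqInr _ _⟩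
  · exact ⟨_, .seq (hv.map some) (.single none), .after v, fun _ _ => seqInl_le_seqInr _ _,
      Set.empty_subset _⟩

theorem seq_left (hv : Pomset.IsSP (⟦v⟧ : Pomset A)) {D U : Set (u.seqL v).carrier}
    (hD : ∀ x, seqInr u v x ∉ D) (h : HasSPExtension u (seqInl u v ⁻¹' D) (seqInl u v ⁻¹' U)) :
    HasSPExtension (u.seqL v) D U := by
  obtain ⟨c, hc, E, hDE, hUE⟩ := h
  refine ⟨_, .seq hc (hv.map some), E.seqLeft v, ?_, ?_⟩
  · rintro (d | d) hd
    · exact (seqInl c _).le_iff_le.mpr (hDE hd)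
    · exact absurd hd (hD d)
  · rintro (w | w) hw
    · exact (seqInl c _).le_iff_le.mpr (hUE hw)
    · exact seqInl_le_seqInr _ _

theorem seq_right (hu : Pomset.IsSP (⟦u⟧ : Pomset A)) {D U : Set (u.seqL v).carrier}
    (hU : ∀ x, seqInl u v x ∉ U) (h : HasSPExtension v (seqInr u v ⁻¹' D) (seqInr u v ⁻¹' U)) :
    HasSPExtension (u.seqL v) D U := by
  obtain ⟨c, hc, E, hDE, hUE⟩ := h
  refine ⟨_, .seq (hu.map some) hc, E.seqRight u, ?_, ?_⟩
  · rintro (d | d) hd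
    · exact seqInl_le_seqInr _ _
    · exact (seqInr _ c).le_iff_le.mpr (hDE hd)
  · rintro (w | w) hw
    · exact absurd hw (hU w)
    · exact (seqInr _ c).le_iff_le.mpr (hUE hw)

theorem par_left (hv : Pomset.IsSP (⟦v⟧ : Pomset A)) {D U : Set (u.parL v).carrier}
    (hD : ∀ x, parInr u v x ∉ D) (hU : ∀ x, parInr u v x ∉ U)
    (h : HasSPExtension u (parInl u v ⁻¹' D) (parInl u v ⁻¹' U)) :
    HasSPExtension (u.parL v) D U := by
  obtain ⟨c, hc, E, hDE, hUE⟩ := h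
  refine ⟨_, .par hc (hv.map some), E.parLeft v, ?_, ?_⟩
  · rintro (d | d) hd
    · exact (parInl c _).le_iff_le.mpr (hDE hd)
    · exact absurd hd (hD d)
  · rintro (w | w) hw
    · exact (parInl c _).le_iff_le.mpr (hUE hw)
    · exact absurd hw (hU w)

theorem par_right (hu : Pomset.IsSP (⟦u⟧ : Pomset A)) {D U : Set (u.parL v).carrier}
    (hD : ∀ x, parInl u v x ∉ D) (hU : ∀ x, parInl u v x ∉ U)
    (h : HasSPExtension v (parInr u v ⁻¹' D) (parInr u v ⁻¹' U)) :
    HasSPExtension (u.parL v) D U := by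
  refine of_iso (u := v.parL u) (OrderIso.sumComm v.carrier u.carrier) ?_ (par_left hu hD hU h)
  rintro (x | x) <;> rfl

theorem seq (hu : Pomset.IsSP (⟦u⟧ : Pomset A)) (hv : Pomset.IsSP (⟦v⟧ : Pomset A))
    (ihu : ∀ {D U}, Precedes D U → HasSPExtension u D U)
    (ihv : ∀ {D U}, Precedes D U → HasSPExtension v D U)
    {D U : Set (u.seqL v).carrier} (h : Precedes D U) : HasSPExtension (u.seqL v) D U := by
  by_cases hD : ∃ x, seqInr u v x ∈ D
  · obtain ⟨d, hd⟩ := hD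
    exact seq_right hu (fun x hx => not_seqInr_lt_seqInl x d (h _ hd _ hx)) (ihv (h.preimage _))
  · exact seq_left hv (not_exists.mp hD) (ihu (h.preimage _))

theorem par (hu : Pomset.IsSP (⟦u⟧ : Pomset A)) (hv : Pomset.IsSP (⟦v⟧ : Pomset A))
    (ihu : ∀ {D U}, Precedes D U → HasSPExtension u D U)
    (ihv : ∀ {D U}, Precedes D U → HasSPExtension v D U)
    {D U : Set (u.parL v).carrier} (h : Precedes D U) : HasSPExtension (u.parL v) D U := by
  rcases D.eq_empty_or_nonempty with hD | ⟨d, hd⟩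
  · exact of_eq_empty (.par hu hv) (.inl hD)
  rcases U.eq_empty_or_nonempty with hU | ⟨w, hw⟩
  · exact of_eq_empty (.par hu hv) (.inr hU)
  rcases d with d | d <;> rcases w with w | w
  · exact par_left hv (fun x hx => not_parInr_lt_parInl w x (h _ hx _ hw))
      (fun x hx => not_parInl_lt_parInr d x (h _ hd _ hx)) (ihu (h.preimage _))
  · exact absurd (h _ hd _ hw) (not_parInl_lt_parInr d w)
  · exact absurd (h _ hd _ hw) (not_parInr_lt_parInl w d)
  · exact par_right hu (fun x hx => not_parInl_lt_parInr x w (h _ hx _ hw))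
      (fun x hx => not_parInr_lt_parInl x d (h _ hd _ hx)) (ihv (h.preimage _))

end HasSPExtension

theorem Pomset.IsSP.hasSPExtension {v : LPoset A} (hv : Pomset.IsSP (⟦v⟧ : Pomset A))
    {D U : Set v.carrier} (h : Precedes D U) : HasSPExtension v D U := by
  generalize hV : (⟦v⟧ : Pomset A) = V at hv
  induction hv generalizing v with
  | empty =>
    obtain ⟨e, -⟩ := Quotient.exact hV
    have : Subsingleton v.carrier := e.injective.subsingleton (β := Fin 0)
    exact .of_eq_empty (hV ▸ .empty) h.eq_empty_or_eq_empty
  | single a =>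
    obtain ⟨e, -⟩ := Quotient.exact hV
    have : Subsingleton v.carrier := e.injective.subsingleton (β := PUnit)
    exact .of_eq_empty (hV ▸ .single a) h.eq_empty_or_eq_empty
  | @seq V₁ V₂ h₁ h₂ ih₁ ih₂ =>
    induction V₁, V₂ using Quotient.inductionOn₂
    obtain ⟨e, he⟩ := Quotient.exact hV.symm
    exact .of_iso e he (.seq h₁ h₂ (ih₁ · rfl) (ih₂ · rfl) (h.preimage e.toOrderEmbedding))
  | @par V₁ V₂ h₁ h₂ ih₁ ih₂ =>
    induction V₁, V₂ using Quotient.inductionOn₂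
    obtain ⟨e, he⟩ := Quotient.exact hV.symm
    exact .of_iso e he (.par h₁ h₂ (ih₁ · rfl) (ih₂ · rfl) (h.preimage e.toOrderEmbedding))

theorem exists_starExtension_isSP {v : LPoset A} {D U : Set v.carrier} (h : Precedes D U) :
    ∃ (c : LPoset (Option A)) (E : StarExtension v c), (D ⊆ E.lower ∧ U ⊆ E.upper) ∧
      (Pomset.IsSP (⟦v⟧ : Pomset A) → Pomset.IsSP (⟦c⟧ : Pomset (Option A))) := by
  by_cases hv : Pomset.IsSP (⟦v⟧ : Pomset A)
  · obtain ⟨c, hc, E, hE⟩ := hv.hasSPExtension h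
    exact ⟨c, E, hE, fun _ => hc⟩
  · obtain ⟨c, E, hE⟩ := exists_starExtension h
    exact ⟨c, E, hE, fun h_sp => absurd h_sp hv⟩

/-- **Context erasure**: if `V ⊑ C[1]` then there is `C' ⊑ C` with `C'[1] = V`;
moreover `C'` can be chosen series-parallel when `V` is. -/
theorem context_erasure (A : Type) (C : Pomset (Option A)) (hC : C.IsCtx)
    (V : Pomset A) (h : Pomset.sub V (C.ins (Pomset.empty A))) :
    ∃ C' : Pomset (Option A), C'.IsCtx ∧ Pomset.sub C' C ∧
      C'.ins (Pomset.empty A) = V ∧ (V.IsSP → C'.IsSP) := by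
  induction C using Quotient.inductionOn with | _ c₀
  induction V using Quotient.inductionOn with | _ v
  obtain ⟨f, f_lab, f_mono⟩ : v.subL (c₀.insL (emptyL A)) := h
  replace f_mono : Monotone f := f_mono
  let E₀ : StarExtension (c₀.insL (emptyL A)) c₀ := .ofUniqueStarL hC
  have gap : Precedes (f '' E₀.lower) (f '' E₀.upper) :=
    E₀.precedes_lower_upper.image (f_mono.strictMono_of_injective f.injective)
  obtain ⟨c, E, ⟨h_lower, h_upper⟩, h_sp⟩ := exists_starExtension_isSP gap
  exact ⟨⟦c⟧, E.uniqueStarL, E.subL_of_subset E₀ f f_lab f_mono h_lower h_upper,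
    (Quotient.sound E.iso_insL_emptyL).symm, h_sp⟩

end CKAH
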